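/- arXiv:2105.14084 — 2 statements merged into one kernel-verified Lean document; each statement's English description precedes it below -/
import Mathlib

section
/- For any C₀ > 0 and c₁ ∈ (0, 2) there exist C₂ > 0 and n₀ > 0 such that for all n ≥ n₀ and all ε with C₂/√(log n) ≤ ε ≤ 2 − c₁, the following holds with d = ⌈(2 − ε) n ln n⌉ and m = ⌊n / ln n⌋. Let (X, y) be an isotropic Gaussian sample of size n in dimension d with rows x₁,…,xₙ. Then with probability at least 1 − 1/n, the matrices K_{∖i} = X_{∖i} X_{∖i}ᵀ are invertible for all i ∈ [m] and max_{i ∈ [m]} | y_i y_{∖i}ᵀ (K_{∖i}⁻¹ − (1/d) I_{n−1}) X_{∖i} x_i | ≤ ε / (2 C₀). -/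
open MeasureTheory ProbabilityTheory Matrix

noncomputable section

/-- `X` has i.i.d. standard Gaussian entries (equivalently, its rows are i.i.d. `N(0, I_d)`). -/
structure IsGaussSample {Ω : Type*} [MeasurableSpace Ω] (μ : Measure Ω)
    {n d : ℕ} (X : Ω → Matrix (Fin n) (Fin d) ℝ) : Prop where
  meas : ∀ i j, Measurable fun ω => X ω i j
  indep : iIndepFun (fun (p : Fin n × Fin d) ω => X ω p.1 p.2) μ
  law : ∀ i j, Measure.map (fun ω => X ω i j) μ = gaussianReal 0 1

/-- `X` with row `i` deleted. -/
def rowDel {n d : ℕ} (X : Matrix (Fin n) (Fin d) ℝ) (i : Fin n) :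
    Matrix {j : Fin n // j ≠ i} (Fin d) ℝ := X.submatrix Subtype.val id

/-- `y` with entry `i` deleted. -/
def vecDel {n : ℕ} (y : Fin n → ℝ) (i : Fin n) : {j : Fin n // j ≠ i} → ℝ := fun j => y j.val

/-!
The row `xᵢ` is independent of `Z = X_{∖i}`, and up to sign the quantity to bound is `⟨V, xᵢ⟩`,
where `V = Zᵀ ((Z Zᵀ)⁻¹ - d⁻¹) y_{∖i}` depends only on `Z`; conditionally on `Z` it is a centred
Gaussian of variance `‖V‖²`. A net of the unit sphere together with `χ²` tails gives
`‖Z Zᵀ - d‖ = O(√(n d))` outside an event of probability `O(5ⁿ exp (-4n))`. There `Z Zᵀ` is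
invertible and, since `‖y_{∖i}‖² ≤ n`, the variance is `O(n² / d²) = O(1 / log² n)`. As
`ε ≥ C₂ / √(log n)`, the Gaussian tail at `ε / (2 C₀)` is at most a large negative power of `n`,
which absorbs a union bound over all `n` rows.
-/

section SphereNet

open Metric Module
open scoped RealInnerProductSpace

lemma packingNumber_sphere_le (E : Type*) [NormedAddCommGroup E] [NormedSpace ℝ E]
    [FiniteDimensional ℝ E] :
    packingNumber (1 / 2) (sphere (0 : E) 1) ≤ (5 ^ finrank ℝ E : ℕ) := by
  simp only [packingNumber, iSup_le_iff]
  intro C hC hsep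
  by_contra! hlt
  obtain ⟨t, htC, ht⟩ := Set.exists_subset_encard_eq (Order.add_one_le_of_lt hlt)
  lift t to Finset E using Set.finite_of_encard_eq_coe ht
  have hcard : t.card = 5 ^ finrank ℝ E + 1 := by exact_mod_cast ht
  have hinj : Function.Injective ((2 : ℝ) • · : E → E) := smul_right_injective E two_ne_zero
  have hle := Besicovitch.card_le_of_separated (t.map ⟨_, hinj⟩)
    (fun c hc ↦ ?_) fun c hc c' hc' hne ↦ ?_
  · rw [Finset.card_map] at hle
    omega
  · obtain ⟨u, hu, rfl⟩ := Finset.mem_map.mp hc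
    simp [norm_smul, mem_sphere_zero_iff_norm.mp (hC (htC hu))]
  · obtain ⟨u, hu, rfl⟩ := Finset.mem_map.mp hc
    obtain ⟨v, hv, rfl⟩ := Finset.mem_map.mp hc'
    have huv : 1 / 2 < dist u v := by
      have : ((1 / 2 : NNReal) : ENNReal) < edist u v :=
        hsep (htC hu) (htC hv) fun h ↦ hne (h ▸ rfl)
      rwa [edist_nndist, ENNReal.coe_lt_coe, ← NNReal.coe_lt_coe, coe_nndist] at this
    simp only [Function.Embedding.coeFn_mk, ← smul_sub, norm_smul, Real.norm_ofNat,
      ← dist_eq_norm]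
    linarith

lemma exists_finset_isCover_sphere (E : Type*) [NormedAddCommGroup E] [NormedSpace ℝ E]
    [FiniteDimensional ℝ E] :
    ∃ N : Finset E, N.card ≤ 5 ^ finrank ℝ E ∧ (N : Set E) ⊆ sphere 0 1 ∧
      IsCover (1 / 2) (sphere (0 : E) 1) N := by
  have hle := packingNumber_sphere_le E
  have hfin : packingNumber (1 / 2) (sphere (0 : E) 1) ≠ ⊤ :=
    (hle.trans_lt (ENat.natCast_lt_top _)).ne
  rw [← encard_maximalSeparatedSet hfin] at hle
  have hN := Set.finite_of_encard_le_coe hle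
  refine ⟨hN.toFinset, ?_, ?_, ?_⟩
  · rwa [hN.encard_eq_coe_toFinset_card, Nat.cast_le] at hle
  · simpa using maximalSeparatedSet_subset
  · simpa using isCover_maximalSeparatedSet hfin

lemma opNorm_le_of_abs_inner_le {E : Type*} [NormedAddCommGroup E] [InnerProductSpace ℝ E]
    {T : E →L[ℝ] E} (hT : T.IsSymmetric) {C : ℝ} (hC : 0 ≤ C)
    (h : ∀ w : E, ‖w‖ = 1 → |⟪T w, w⟫| ≤ C) : ‖T‖ ≤ C := by
  refine (T.norm_eq_iSup_rayleighQuotient hT).trans_le (ciSup_le fun x ↦ ?_)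
  rcases eq_or_ne x 0 with rfl | hx
  · rwa [T.rayleighQuotient_apply_zero, abs_zero]
  · have hw := NormedSpace.norm_normalize_eq_one_iff.mpr hx
    rw [← NormedSpace.norm_smul_normalize x, T.rayleigh_smul _ (norm_ne_zero_iff.mpr hx)]
    simpa [ContinuousLinearMap.rayleighQuotient, ContinuousLinearMap.reApplyInnerSelf_apply, hw]
      using h _ hw

lemma abs_inner_sub_inner_le {E : Type*} [NormedAddCommGroup E] [InnerProductSpace ℝ E]
    {T : E →L[ℝ] E} (hT : T.IsSymmetric) (w u : E) :
    |⟪T w, w⟫ - ⟪T u, u⟫| ≤ ‖T‖ * (‖w - u‖ * ‖w + u‖) := by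
  have hTuw : ⟪T u, w⟫ = ⟪T w, u⟫ := (hT u w).trans (real_inner_comm _ _)
  calc |⟪T w, w⟫ - ⟪T u, u⟫| = |⟪T (w - u), w + u⟫| := by
        rw [map_sub, inner_add_right, inner_sub_left, inner_sub_left, hTuw]
        ring_nf
    _ ≤ ‖T (w - u)‖ * ‖w + u‖ := abs_real_inner_le_norm _ _
    _ ≤ ‖T‖ * (‖w - u‖ * ‖w + u‖) := by
        rw [← mul_assoc]
        gcongr
        exact T.le_opNorm _

-- The triangle inequality only gives `‖w - u‖ * ‖w + u‖ ≤ 1`, which is useless for a `1 / 2`-net;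
-- the parallelogram law makes the constant smaller than `1`.
lemma norm_sub_mul_norm_add_le {E : Type*} [NormedAddCommGroup E] [InnerProductSpace ℝ E]
    {w u : E} (hw : ‖w‖ = 1) (hu : ‖u‖ = 1) (hwu : ‖w - u‖ ≤ 1 / 2) :
    ‖w - u‖ * ‖w + u‖ ≤ 31 / 32 := by
  have hpar := parallelogram_law_with_norm ℝ w u
  rw [hw, hu] at hpar
  have hsq : ‖w - u‖ ^ 2 ≤ 1 / 4 := by nlinarith [norm_nonneg (w - u)]
  refine abs_le_of_sq_le_sq' ?_ (by norm_num) |>.2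
  rw [mul_pow, show ‖w + u‖ ^ 2 = 4 - ‖w - u‖ ^ 2 by linarith]
  nlinarith

lemma opNorm_le_of_isCover_sphere {E : Type*} [NormedAddCommGroup E] [InnerProductSpace ℝ E]
    {T : E →L[ℝ] E} (hT : T.IsSymmetric) {N : Set E} (hN : N ⊆ sphere 0 1)
    (hcover : IsCover (1 / 2) (sphere 0 1) N) {η : ℝ} (hη : 0 ≤ η)
    (h : ∀ w ∈ N, |⟪T w, w⟫| ≤ η) : ‖T‖ ≤ 32 * η := by
  have hunit (w : E) (hw : ‖w‖ = 1) : |⟪T w, w⟫| ≤ η + 31 / 32 * ‖T‖ := by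
    obtain ⟨u, huN, hwu⟩ := hcover (mem_sphere_zero_iff_norm.mpr hw)
    have hu := mem_sphere_zero_iff_norm.mp (hN huN)
    have hdist : ‖w - u‖ ≤ 1 / 2 := by
      have : edist w u ≤ ((1 / 2 : NNReal) : ENNReal) := hwu
      rwa [edist_nndist, ENNReal.coe_le_coe, ← NNReal.coe_le_coe, coe_nndist, dist_eq_norm] at this
    have hdiff := abs_inner_sub_inner_le hT w u
    have hprod := mul_le_mul_of_nonneg_left (norm_sub_mul_norm_add_le hw hu hdist) (norm_nonneg T)
    linarith [abs_sub_abs_le_abs_sub ⟪T w, w⟫ ⟪T u, u⟫, h u huN]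
  linarith [opNorm_le_of_abs_inner_le hT (by positivity) hunit]

end SphereNet

section NormSqTail

open Module

lemma integral_exp_mul_sq_gaussianReal {θ : ℝ} (hθ : θ < 1 / 2) :
    ∫ x, Real.exp (θ * x ^ 2) ∂gaussianReal 0 1 = (√(1 - 2 * θ))⁻¹ := by
  have hdens (x : ℝ) : gaussianPDFReal 0 1 x • Real.exp (θ * x ^ 2) =
      (√(2 * Real.pi))⁻¹ * Real.exp (-(1 / 2 - θ) * x ^ 2) := by
    rw [gaussianPDFReal_def, smul_eq_mul, mul_assoc, ← Real.exp_add]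
    simp only [NNReal.coe_one, mul_one, sub_zero]
    ring_nf
  simp only [integral_gaussianReal_eq_integral_smul one_ne_zero, hdens]
  rw [integral_const_mul, integral_gaussian, ← Real.sqrt_inv, ← Real.sqrt_inv,
    ← Real.sqrt_mul (by positivity)]
  have : 0 < 1 / 2 - θ := by linarith
  have : 0 < 1 - 2 * θ := by linarith
  congr 1
  field_simp

variable (E : Type*) [NormedAddCommGroup E] [InnerProductSpace ℝ E] [FiniteDimensional ℝ E]
  [MeasurableSpace E] [BorelSpace E]

lemma mgf_norm_sq_stdGaussian {θ : ℝ} (hθ : θ < 1 / 2) :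
    mgf (fun x : E ↦ ‖x‖ ^ 2) (stdGaussian E) θ = (√(1 - 2 * θ))⁻¹ ^ finrank ℝ E := by
  set b := stdOrthonormalBasis ℝ E
  have hnorm (x : Fin (finrank ℝ E) → ℝ) : ‖∑ i, x i • b i‖ ^ 2 = ∑ i, x i ^ 2 := by
    rw [← real_inner_self_eq_norm_sq, b.orthonormal.inner_sum]
    simp [sq]
  have hmeas : Measurable fun x : Fin (finrank ℝ E) → ℝ ↦ ∑ i, x i • b i := by fun_prop
  rw [mgf, stdGaussian_eq_map_pi_orthonormalBasis b,
    integral_map hmeas.aemeasurable (by fun_prop)]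
  simp only [hnorm, Finset.mul_sum, Real.exp_sum]
  rw [integral_fintype_prod_eq_pow fun t ↦ Real.exp (θ * t ^ 2), Fintype.card_fin,
    integral_exp_mul_sq_gaussianReal hθ]

lemma inv_sqrt_one_sub_two_mul_le_exp {θ : ℝ} (hθ : |θ| ≤ 1 / 4) :
    (√(1 - 2 * θ))⁻¹ ≤ Real.exp (θ + 4 * θ ^ 2) := by
  have habs : |2 * θ| ≤ 1 / 2 := by
    rw [abs_mul, abs_two]
    linarith
  have hpos : 0 < 1 - 2 * θ := by linarith [le_abs_self (2 * θ)]
  have hlog : -(2 * θ + 8 * θ ^ 2) ≤ Real.log (1 - 2 * θ) := by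
    have htaylor := Real.abs_log_sub_add_sum_range_le (habs.trans_lt one_half_lt_one) 1
    have hrem : |2 * θ| ^ 2 / (1 - |2 * θ|) ≤ 8 * θ ^ 2 := by
      rw [sq_abs, div_le_iff₀ (by linarith)]
      nlinarith [sq_nonneg θ]
    simp only [Finset.sum_range_one, zero_add, pow_one, Nat.cast_zero, div_one,
      one_add_one_eq_two] at htaylor
    linarith [(abs_le.mp htaylor).1]
  rw [inv_le_comm₀ (Real.sqrt_pos.mpr hpos) (Real.exp_pos _), ← Real.exp_neg]
  refine Real.le_sqrt_of_sq_le ?_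
  rw [← Real.exp_nat_mul, ← Real.le_log_iff_exp_le hpos]
  push_cast
  linarith

lemma integrable_exp_mul_norm_sq_stdGaussian {θ : ℝ} (hθ : θ < 1 / 2) :
    Integrable (fun x : E ↦ Real.exp (θ * ‖x‖ ^ 2)) (stdGaussian E) := by
  refine Integrable.of_integral_ne_zero ?_
  change mgf (fun x : E ↦ ‖x‖ ^ 2) (stdGaussian E) θ ≠ 0
  rw [mgf_norm_sq_stdGaussian E hθ]
  have hpos : 0 < √(1 - 2 * θ) := Real.sqrt_pos.mpr (by linarith)
  positivity

lemma mgf_norm_sq_stdGaussian_le {θ : ℝ} (hθ : |θ| ≤ 1 / 4) :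
    mgf (fun x : E ↦ ‖x‖ ^ 2) (stdGaussian E) θ ≤
      Real.exp (finrank ℝ E * (θ + 4 * θ ^ 2)) := by
  rw [mgf_norm_sq_stdGaussian E (by linarith [le_abs_self θ]), Real.exp_nat_mul]
  gcongr
  exact inv_sqrt_one_sub_two_mul_le_exp hθ

lemma stdGaussian_lt_abs_norm_sq_sub_finrank_le {δ : ℝ} (hδ₀ : 0 ≤ δ) (hδ₁ : δ ≤ 1) :
    (stdGaussian E).real {x | δ * finrank ℝ E < |‖x‖ ^ 2 - finrank ℝ E|} ≤
      2 * Real.exp (-(δ ^ 2 * finrank ℝ E / 16)) := by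
  set d := (finrank ℝ E : ℝ)
  have hupper : (stdGaussian E).real {x | d + δ * d ≤ ‖x‖ ^ 2} ≤
      Real.exp (-(δ ^ 2 * d / 16)) := by
    refine (measure_ge_le_exp_mul_mgf (t := δ / 8) _ (by positivity)
      (integrable_exp_mul_norm_sq_stdGaussian E (by linarith))).trans ?_
    grw [mgf_norm_sq_stdGaussian_le E (by rw [abs_of_nonneg (by positivity)]; linarith),
      ← Real.exp_add]
    exact (congrArg Real.exp (by ring)).le
  have hlower : (stdGaussian E).real {x | ‖x‖ ^ 2 ≤ d - δ * d} ≤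
      Real.exp (-(δ ^ 2 * d / 16)) := by
    refine (measure_le_le_exp_mul_mgf (t := -(δ / 8)) _ (by linarith)
      (integrable_exp_mul_norm_sq_stdGaussian E (by linarith))).trans ?_
    grw [mgf_norm_sq_stdGaussian_le E (by rw [abs_neg, abs_of_nonneg (by positivity)]; linarith),
      ← Real.exp_add]
    exact (congrArg Real.exp (by ring)).le
  have hsub : {x : E | δ * d < |‖x‖ ^ 2 - d|} ⊆
      {x | d + δ * d ≤ ‖x‖ ^ 2} ∪ {x | ‖x‖ ^ 2 ≤ d - δ * d} := by
    intro x (hx : δ * d < |‖x‖ ^ 2 - d|)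
    rcases lt_abs.mp hx with h | h
    · exact Or.inl (show d + δ * d ≤ ‖x‖ ^ 2 by linarith)
    · exact Or.inr (show ‖x‖ ^ 2 ≤ d - δ * d by linarith)
  refine (measureReal_mono hsub).trans ((measureReal_union_le _ _).trans ?_)
  linarith

end NormSqTail

section GaussianImages

open scoped RealInnerProductSpace NNReal

variable {E F : Type*} [NormedAddCommGroup E] [InnerProductSpace ℝ E] [FiniteDimensional ℝ E]
  [MeasurableSpace E] [BorelSpace E] [NormedAddCommGroup F] [InnerProductSpace ℝ F]
  [FiniteDimensional ℝ F] [MeasurableSpace F] [BorelSpace F]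

lemma map_stdGaussian_of_norm_adjoint (L : E →L[ℝ] F) (hL : ∀ t, ‖L.adjoint t‖ = ‖t‖) :
    (stdGaussian E).map L = stdGaussian F := by
  refine Measure.ext_of_charFun (funext fun t ↦ ?_)
  rw [charFun_stdGaussian, ← hL, ← charFun_stdGaussian, charFun_apply, charFun_apply,
    integral_map (by fun_prop) (by fun_prop)]
  simp only [ContinuousLinearMap.adjoint_inner_right]

lemma map_inner_stdGaussian (v : E) :
    (stdGaussian E).map (fun x ↦ ⟪v, x⟫) = gaussianReal 0 (‖v‖₊ ^ 2) := by
  have h := IsGaussian.map_eq_gaussianReal (μ := stdGaussian E) (innerSL ℝ v)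
  rw [integral_strongDual_stdGaussian, variance_dual_stdGaussian, innerSL_apply_norm] at h
  simpa [Real.toNNReal_pow, norm_toNNReal] using h

lemma hasSubgaussianMGF_inner_stdGaussian {v : E} {s : ℝ≥0} (hv : ‖v‖₊ ^ 2 ≤ s) :
    HasSubgaussianMGF (fun x ↦ ⟪v, x⟫) s (stdGaussian E) := by
  rw [← HasSubgaussianMGF.id_map_iff (by fun_prop), map_inner_stdGaussian]
  refine ⟨integrable_exp_mul_gaussianReal, fun θ ↦ ?_⟩
  simp only [mgf_id_gaussianReal, zero_mul, zero_add]
  gcongr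

lemma stdGaussian_lt_abs_inner_le {v : E} {s : ℝ≥0} (hv : ‖v‖₊ ^ 2 ≤ s) {t : ℝ} (ht : 0 ≤ t) :
    (stdGaussian E).real {x | t < |⟪v, x⟫|} ≤ 2 * Real.exp (-t ^ 2 / (2 * s)) := by
  have htail := hasSubgaussianMGF_inner_stdGaussian hv
  have hsub : {x : E | t < |⟪v, x⟫|} ⊆ {x | t ≤ ⟪v, x⟫} ∪ {x | t ≤ -⟪v, x⟫} :=
    fun x (hx : t < |⟪v, x⟫|) ↦ (lt_abs.mp hx).imp le_of_lt le_of_lt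
  refine (measureReal_mono hsub).trans ((measureReal_union_le _ _).trans ?_)
  have hneg : (stdGaussian E).real {x | t ≤ -⟪v, x⟫} ≤ Real.exp (-t ^ 2 / (2 * s)) :=
    htail.neg.measure_ge_le ht
  linarith [htail.measure_ge_le ht]

variable {Ω : Type*} [MeasurableSpace Ω]

lemma prod_stdGaussian_lt_abs_inner_le (ρ : Measure Ω) [IsProbabilityMeasure ρ] {V : Ω → E}
    (hV : Measurable V) (s : ℝ≥0) {t : ℝ} (ht : 0 ≤ t) :
    (ρ.prod (stdGaussian E)).real {p | t < |⟪V p.1, p.2⟫| ∧ ‖V p.1‖₊ ^ 2 ≤ s} ≤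
      2 * Real.exp (-t ^ 2 / (2 * s)) := by
  have hmeas : MeasurableSet {p : Ω × E | t < |⟪V p.1, p.2⟫| ∧ ‖V p.1‖₊ ^ 2 ≤ s} := by
    measurability
  have hfiber (ω : Ω) : stdGaussian E {x | t < |⟪V ω, x⟫| ∧ ‖V ω‖₊ ^ 2 ≤ s} ≤
      ENNReal.ofReal (2 * Real.exp (-t ^ 2 / (2 * s))) := by
    by_cases hω : ‖V ω‖₊ ^ 2 ≤ s
    · simp only [hω, and_true]
      rw [← ofReal_measureReal]
      exact ENNReal.ofReal_le_ofReal (stdGaussian_lt_abs_inner_le hω ht)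
    · simp [hω]
  refine ENNReal.toReal_le_of_le_ofReal (by positivity) ?_
  rw [Measure.prod_apply hmeas]
  refine (lintegral_mono hfiber).trans ?_
  rw [lintegral_const, measure_univ, mul_one]

end GaussianImages

/-- The matrix whose `(i, j)` entry is the coordinate `(i, j)` of `z`: a random matrix with
independent `N(0, 1)` entries is the image of `stdGaussian` under this map. -/
def matrixOfCoords {ι κ : Type*} (z : EuclideanSpace ℝ (ι × κ)) : Matrix ι κ ℝ :=
  Matrix.of fun i j ↦ z (i, j)

section GramOpNorm

open scoped RealInnerProductSpace Matrix.Norms.L2Operator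

variable {ι κ : Type*}

@[fun_prop]
lemma continuous_matrixOfCoords :
    Continuous (matrixOfCoords : EuclideanSpace ℝ (ι × κ) → Matrix ι κ ℝ) := by
  unfold matrixOfCoords
  fun_prop

variable [Fintype κ]

lemma isHermitian_mul_transpose_sub_smul_one [DecidableEq ι]
    (Z : Matrix ι κ ℝ) (c : ℝ) :
    (Z * Zᵀ - c • 1).IsHermitian := by
  rw [← conjTranspose_eq_transpose_of_trivial]
  exact (isHermitian_mul_conjTranspose_self Z).sub (isHermitian_one.smul (.all c))

variable [Fintype ι]

lemma map_transpose_mulVec_stdGaussian {w : EuclideanSpace ℝ ι} (hw : ‖w‖ = 1) :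
    (stdGaussian (EuclideanSpace ℝ (ι × κ))).map
      (fun z ↦ WithLp.toLp 2 ((matrixOfCoords z)ᵀ *ᵥ w)) = stdGaussian (EuclideanSpace ℝ κ) := by
  let L : EuclideanSpace ℝ (ι × κ) →ₗ[ℝ] EuclideanSpace ℝ κ :=
    { toFun z := WithLp.toLp 2 ((matrixOfCoords z)ᵀ *ᵥ w)
      map_add' z z' := by
        ext j
        simp [matrixOfCoords, mulVec, dotProduct, add_mul, Finset.sum_add_distrib]
      map_smul' c z := by
        ext j
        simp [matrixOfCoords, mulVec, dotProduct, mul_assoc, Finset.mul_sum] }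
  refine map_stdGaussian_of_norm_adjoint L.toContinuousLinearMap fun t ↦ ?_
  have hadj : L.toContinuousLinearMap.adjoint t = WithLp.toLp 2 fun p ↦ w p.1 * t p.2 := by
    refine ext_inner_right ℝ fun z ↦ ?_
    rw [ContinuousLinearMap.adjoint_inner_left]
    simp only [L, LinearMap.coe_toContinuousLinearMap', LinearMap.coe_mk, AddHom.coe_mk,
      PiLp.inner_apply, RCLike.inner_apply, conj_trivial, mulVec, dotProduct, matrixOfCoords,
      transpose_apply, of_apply, Fintype.sum_prod_type, Finset.sum_mul]
    rw [Finset.sum_comm]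
    simp only [mul_assoc]
  rw [← sq_eq_sq₀ (norm_nonneg _) (norm_nonneg _), hadj, EuclideanSpace.norm_sq_eq,
    EuclideanSpace.norm_sq_eq, Fintype.sum_prod_type]
  simp only [norm_mul, mul_pow, ← Finset.mul_sum]
  rw [← Finset.sum_mul, ← EuclideanSpace.norm_sq_eq, hw, one_pow, one_mul]

lemma stdGaussian_lt_abs_norm_transpose_mulVec_sq_sub_le {w : EuclideanSpace ℝ ι} (hw : ‖w‖ = 1)
    {δ : ℝ} (hδ₀ : 0 ≤ δ) (hδ₁ : δ ≤ 1) :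
    (stdGaussian (EuclideanSpace ℝ (ι × κ))).real {z | δ * Fintype.card κ <
      |‖WithLp.toLp 2 ((matrixOfCoords z)ᵀ *ᵥ w)‖ ^ 2 - Fintype.card κ|} ≤
      2 * Real.exp (-(δ ^ 2 * Fintype.card κ / 16)) := by
  have htail := stdGaussian_lt_abs_norm_sq_sub_finrank_le (EuclideanSpace ℝ κ) hδ₀ hδ₁
  rwa [finrank_euclideanSpace, ← map_transpose_mulVec_stdGaussian hw,
    map_measureReal_apply (Continuous.measurable (by fun_prop))
      (measurableSet_lt (by fun_prop) (by fun_prop))] at htail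

variable [DecidableEq ι]

lemma inner_mul_transpose_sub_smul_one (Z : Matrix ι κ ℝ) (c : ℝ) (w : EuclideanSpace ℝ ι) :
    ⟪toEuclideanCLM (𝕜 := ℝ) (Z * Zᵀ - c • 1) w, w⟫ =
      ‖WithLp.toLp 2 (Zᵀ *ᵥ w)‖ ^ 2 - c * ‖w‖ ^ 2 := by
  rw [real_inner_comm, inner_toEuclideanCLM, sub_mulVec, smul_mulVec, one_mulVec, dotProduct_sub,
    dotProduct_smul, ← mulVec_mulVec, dotProduct_mulVec, ← mulVec_transpose, smul_eq_mul,
    EuclideanSpace.real_norm_sq_eq, EuclideanSpace.real_norm_sq_eq]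
  simp only [dotProduct, sq]

lemma stdGaussian_lt_norm_mul_transpose_sub_le {δ : ℝ} (hδ₀ : 0 ≤ δ) (hδ₁ : δ ≤ 1) :
    (stdGaussian (EuclideanSpace ℝ (ι × κ))).real
      {z | 32 * (δ * Fintype.card κ) <
        ‖matrixOfCoords z * (matrixOfCoords z)ᵀ - (Fintype.card κ : ℝ) • 1‖} ≤
      5 ^ Fintype.card ι * (2 * Real.exp (-(δ ^ 2 * Fintype.card κ / 16))) := by
  set d := (Fintype.card κ : ℝ)
  obtain ⟨N, hNcard, hNsub, hNcover⟩ := exists_finset_isCover_sphere (EuclideanSpace ℝ ι)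
  rw [finrank_euclideanSpace] at hNcard
  let badAt (w : EuclideanSpace ℝ ι) : Set (EuclideanSpace ℝ (ι × κ)) :=
    {z | δ * d < |‖WithLp.toLp 2 ((matrixOfCoords z)ᵀ *ᵥ w)‖ ^ 2 - d|}
  have hbadAt : ∀ w ∈ N, (stdGaussian _).real (badAt w) ≤
      2 * Real.exp (-(δ ^ 2 * d / 16)) := fun w hw ↦
    stdGaussian_lt_abs_norm_transpose_mulVec_sq_sub_le
      (mem_sphere_zero_iff_norm.mp (hNsub hw)) hδ₀ hδ₁
  have hsub : {z : EuclideanSpace ℝ (ι × κ) |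
      32 * (δ * d) < ‖matrixOfCoords z * (matrixOfCoords z)ᵀ - d • 1‖} ⊆
      ⋃ w ∈ N, badAt w := by
    intro z hz
    contrapose! hz
    simp only [Set.mem_iUnion, not_exists] at hz
    rw [Set.mem_ofPred_eq, not_lt, cstar_norm_def]
    refine opNorm_le_of_isCover_sphere ?_ hNsub hNcover (by positivity) fun w hw ↦ ?_
    · exact (isHermitian_mul_transpose_sub_smul_one _ _).isSelfAdjoint.map _ |>.isSymmetric
    · rw [inner_mul_transpose_sub_smul_one, mem_sphere_zero_iff_norm.mp (hNsub hw), one_pow,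
        mul_one]
      exact not_lt.mp (hz w hw)
  calc _ ≤ (stdGaussian _).real (⋃ w ∈ N, badAt w) := measureReal_mono hsub (measure_ne_top _ _)
    _ ≤ ∑ w ∈ N, (stdGaussian _).real (badAt w) := measureReal_biUnion_finset_le _ _
    _ ≤ N.card • (2 * Real.exp (-(δ ^ 2 * d / 16))) := Finset.sum_le_card_nsmul _ _ _ hbadAt
    _ ≤ _ := by
      rw [nsmul_eq_mul]
      gcongr
      exact_mod_cast hNcard

end GramOpNorm

/-- The difference between the minimum-norm interpolator `Zᵀ (Z Zᵀ)⁻¹ y` of the labels `y` and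
the rescaled average `c Zᵀ y`; junk when `Z Zᵀ` is singular. -/
def interpolatorError {ι κ : Type*} [Fintype ι] [Fintype κ] [DecidableEq ι] (Z : Matrix ι κ ℝ)
    (c : ℝ) (y : ι → ℝ) : EuclideanSpace ℝ κ :=
  WithLp.toLp 2 (Zᵀ *ᵥ (((Z * Zᵀ)⁻¹ - c • 1) *ᵥ y))

section InterpolatorError

open scoped RealInnerProductSpace Matrix.Norms.L2Operator

variable {ι κ : Type*} [Fintype ι] [Fintype κ] [DecidableEq ι]

lemma dotProduct_inv_sub_smul_one_mulVec (Z : Matrix ι κ ℝ) (c : ℝ) (y : ι → ℝ)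
    (x : EuclideanSpace ℝ κ) :
    y ⬝ᵥ (((Z * Zᵀ)⁻¹ - c • 1) *ᵥ (Z *ᵥ x)) = ⟪interpolatorError Z c y, x⟫ := by
  have hsymm : ((Z * Zᵀ)⁻¹ - c • (1 : Matrix ι ι ℝ))ᵀ = (Z * Zᵀ)⁻¹ - c • 1 := by
    simp [transpose_nonsing_inv]
  rw [dotProduct_mulVec, ← mulVec_transpose, hsymm, dotProduct_mulVec, ← mulVec_transpose,
    real_inner_comm, EuclideanSpace.inner_eq_star_dotProduct, star_trivial]
  rfl

lemma measurable_interpolatorError (c : ℝ) (y : ι → ℝ) :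
    Measurable fun z : EuclideanSpace ℝ (ι × κ) ↦ interpolatorError (matrixOfCoords z) c y := by
  have hinv (i j : ι) : Measurable fun z : EuclideanSpace ℝ (ι × κ) ↦
      (matrixOfCoords z * (matrixOfCoords z)ᵀ)⁻¹ i j := by
    simp only [inv_def, Ring.inverse_eq_inv', Matrix.smul_apply, smul_eq_mul]
    exact (Continuous.measurable (by fun_prop)).inv.mul (Continuous.measurable (by fun_prop))
  refine (WithLp.measurable_toLp 2 _).comp (measurable_pi_iff.mpr fun k ↦ ?_)
  simp only [mulVec, dotProduct, transpose_apply, Matrix.sub_apply]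
  refine Finset.measurable_sum _ fun i _ ↦ Measurable.mul (Continuous.measurable (by fun_prop)) ?_
  exact Finset.measurable_sum _ fun j _ ↦ ((hinv i j).sub_const _).mul_const _

lemma sub_norm_sub_smul_one_mul_norm_le (A : Matrix ι ι ℝ) (c : ℝ) (w : EuclideanSpace ℝ ι) :
    (c - ‖A - c • 1‖) * ‖w‖ ≤ ‖WithLp.toLp 2 (A *ᵥ w)‖ := by
  have hsplit : c • w = WithLp.toLp 2 (A *ᵥ w) - WithLp.toLp 2 ((A - c • 1) *ᵥ w) := by
    rw [sub_mulVec, smul_mulVec, one_mulVec, WithLp.toLp_sub, sub_sub_cancel, WithLp.toLp_smul]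
  have hnorm : c * ‖w‖ ≤ ‖c • w‖ := by
    rw [norm_smul]
    gcongr
    exact Real.le_norm_self c
  have htriangle := norm_sub_le (WithLp.toLp 2 (A *ᵥ w)) (WithLp.toLp 2 ((A - c • 1) *ᵥ w))
  rw [← hsplit] at htriangle
  have hop : ‖WithLp.toLp 2 ((A - c • 1) *ᵥ w)‖ ≤ ‖A - c • 1‖ * ‖w‖ := l2_opNorm_mulVec _ w
  linarith

lemma isUnit_det_of_norm_sub_smul_one_lt {A : Matrix ι ι ℝ} {c : ℝ} (h : ‖A - c • 1‖ < c) :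
    IsUnit A.det := by
  rw [isUnit_iff_ne_zero]
  intro hdet
  obtain ⟨w, hw, hAw⟩ := exists_mulVec_eq_zero_iff.mpr hdet
  have hle := sub_norm_sub_smul_one_mul_norm_le A c (WithLp.toLp 2 w)
  rw [hAw, WithLp.toLp_zero, norm_zero] at hle
  have hpos : 0 < ‖WithLp.toLp 2 w‖ := norm_pos_iff.mpr (by simpa using hw)
  nlinarith

lemma norm_inv_sub_inv_smul_one_mulVec_le {A : Matrix ι ι ℝ} {c M : ℝ} (hc : 0 < c)
    (hM : M ≤ c / 2) (h : ‖A - c • 1‖ ≤ M) (y : ι → ℝ) :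
    ‖WithLp.toLp 2 ((A⁻¹ - c⁻¹ • 1) *ᵥ y)‖ ≤ 2 * M / c ^ 2 * ‖WithLp.toLp 2 y‖ := by
  have hunit := isUnit_det_of_norm_sub_smul_one_lt (A := A) (c := c) (by linarith)
  set z : EuclideanSpace ℝ ι := WithLp.toLp 2 (A⁻¹ *ᵥ y)
  have hAz : A *ᵥ z = y := by
    simp only [z, mulVec_mulVec, mul_nonsing_inv _ hunit, one_mulVec]
  have hz : c / 2 * ‖z‖ ≤ ‖WithLp.toLp 2 y‖ := by
    refine le_trans ?_ (hAz ▸ sub_norm_sub_smul_one_mul_norm_le A c z)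
    gcongr
    linarith
  have hresolvent : WithLp.toLp 2 ((A⁻¹ - c⁻¹ • 1) *ᵥ y) =
      (-c⁻¹) • WithLp.toLp 2 ((A - c • 1) *ᵥ z) := by
    ext i
    simp only [sub_mulVec, smul_mulVec, one_mulVec, hAz, z, Pi.sub_apply, Pi.smul_apply,
      PiLp.smul_apply, smul_eq_mul]
    field_simp
    ring
  rw [hresolvent, norm_smul, norm_neg, norm_inv, Real.norm_of_nonneg hc.le]
  calc c⁻¹ * ‖WithLp.toLp 2 ((A - c • 1) *ᵥ z)‖ ≤ c⁻¹ * (M * ‖z‖) := by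
        gcongr
        exact (l2_opNorm_mulVec _ z).trans (by gcongr)
    _ = 2 * M / c ^ 2 * (c / 2 * ‖z‖) := by field_simp
    _ ≤ 2 * M / c ^ 2 * ‖WithLp.toLp 2 y‖ := by
        have := (norm_nonneg _).trans h
        gcongr

lemma norm_interpolatorError_sq_le {Z : Matrix ι κ ℝ} {c M : ℝ} (hc : 0 < c) (hM : M ≤ c / 2)
    (h : ‖Z * Zᵀ - c • 1‖ ≤ M) (y : ι → ℝ) :
    ‖interpolatorError Z c⁻¹ y‖ ^ 2 ≤ 6 * M ^ 2 / c ^ 3 * ‖WithLp.toLp 2 y‖ ^ 2 := by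
  set r : EuclideanSpace ℝ ι := WithLp.toLp 2 (((Z * Zᵀ)⁻¹ - c⁻¹ • 1) *ᵥ y)
  have hr : ‖r‖ ≤ 2 * M / c ^ 2 * ‖WithLp.toLp 2 y‖ :=
    norm_inv_sub_inv_smul_one_mulVec_le hc hM h y
  have hquad : ‖interpolatorError Z c⁻¹ y‖ ^ 2 - c * ‖r‖ ^ 2 ≤ M * ‖r‖ ^ 2 := by
    refine (inner_mul_transpose_sub_smul_one Z c r).symm.trans_le ?_
    refine (real_inner_le_norm _ _).trans ?_
    rw [sq, ← mul_assoc]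
    gcongr
    exact (ContinuousLinearMap.le_opNorm _ _).trans (by rw [l2_opNorm_toEuclideanCLM]; gcongr)
  calc ‖interpolatorError Z c⁻¹ y‖ ^ 2 ≤ 3 * c / 2 * ‖r‖ ^ 2 := by nlinarith [sq_nonneg ‖r‖]
    _ ≤ 3 * c / 2 * (2 * M / c ^ 2 * ‖WithLp.toLp 2 y‖) ^ 2 := by gcongr
    _ = 6 * M ^ 2 / c ^ 3 * ‖WithLp.toLp 2 y‖ ^ 2 := by
        field_simp
        ring

end InterpolatorError

/-- The Gram matrix `Z Zᵀ` is invertible and, at the test point `x`, the minimum-norm interpolator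
of the labels `y` differs by at most `t` from the rescaled average `d⁻¹ Zᵀ y`, where `d = |κ|`. -/
def InterpolatesWithin {ι κ : Type*} [Fintype ι] [Fintype κ] [DecidableEq ι] (Z : Matrix ι κ ℝ)
    (y : ι → ℝ) (x : κ → ℝ) (t : ℝ) : Prop :=
  IsUnit (Z * Zᵀ).det ∧
    |y ⬝ᵥ (((Z * Zᵀ)⁻¹ - (Fintype.card κ : ℝ)⁻¹ • 1) *ᵥ (Z *ᵥ x))| ≤ t

section OneRow

open scoped RealInnerProductSpace NNReal Matrix.Norms.L2Operator

variable {ι κ : Type*} [Fintype ι] [Fintype κ] [DecidableEq ι]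

lemma interpolatesWithin_of_norm_le {Z : Matrix ι κ ℝ} {y : ι → ℝ} {x : EuclideanSpace ℝ κ}
    {δ t s : ℝ} (hκ : 0 < Fintype.card κ) (hδ : δ ≤ 1 / 64)
    (hs : 6144 * δ ^ 2 / Fintype.card κ * ‖WithLp.toLp 2 y‖ ^ 2 ≤ s)
    (hop : ‖Z * Zᵀ - (Fintype.card κ : ℝ) • 1‖ ≤ 32 * (δ * Fintype.card κ))
    (hx : ‖interpolatorError Z (Fintype.card κ : ℝ)⁻¹ y‖ ^ 2 ≤ s →
      |⟪interpolatorError Z (Fintype.card κ : ℝ)⁻¹ y, x⟫| ≤ t) :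
    InterpolatesWithin Z y x t := by
  set d := (Fintype.card κ : ℝ)
  have hd : 0 < d := Nat.cast_pos.mpr hκ
  have hM : 32 * (δ * d) ≤ d / 2 := by nlinarith
  refine ⟨isUnit_det_of_norm_sub_smul_one_lt (hop.trans_lt (by linarith)), ?_⟩
  rw [dotProduct_inv_sub_smul_one_mulVec]
  refine hx ((norm_interpolatorError_sq_le hd hM hop y).trans (le_trans (le_of_eq ?_) hs))
  field_simp
  ring

lemma prod_stdGaussian_not_interpolatesWithin_le [Nonempty κ] (y : ι → ℝ) {δ t : ℝ} (s : ℝ≥0)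
    (hδ₀ : 0 ≤ δ) (hδ₁ : δ ≤ 1 / 64) (ht : 0 ≤ t)
    (hs : 6144 * δ ^ 2 / Fintype.card κ * ‖WithLp.toLp 2 y‖ ^ 2 ≤ s) :
    ((stdGaussian (EuclideanSpace ℝ (ι × κ))).prod (stdGaussian (EuclideanSpace ℝ κ))).real
      {p | ¬ InterpolatesWithin (matrixOfCoords p.1) y p.2 t} ≤
      5 ^ Fintype.card ι * (2 * Real.exp (-(δ ^ 2 * Fintype.card κ / 16))) +
        2 * Real.exp (-t ^ 2 / (2 * s)) := by
  set V := fun z : EuclideanSpace ℝ (ι × κ) ↦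
    interpolatorError (matrixOfCoords z) (Fintype.card κ : ℝ)⁻¹ y
  set badGram := {z : EuclideanSpace ℝ (ι × κ) | 32 * (δ * Fintype.card κ) <
    ‖matrixOfCoords z * (matrixOfCoords z)ᵀ - (Fintype.card κ : ℝ) • 1‖}
  set badInner := {p : EuclideanSpace ℝ (ι × κ) × EuclideanSpace ℝ κ |
    t < |⟪V p.1, p.2⟫| ∧ ‖V p.1‖₊ ^ 2 ≤ s}
  have hsub : {p : EuclideanSpace ℝ (ι × κ) × EuclideanSpace ℝ κ |
      ¬ InterpolatesWithin (matrixOfCoords p.1) y p.2 t} ⊆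
      badGram ×ˢ Set.univ ∪ badInner := by
    intro p hp
    contrapose! hp
    simp only [Set.mem_union, Set.mem_prod, Set.mem_univ, and_true, not_or, badGram, badInner,
      Set.mem_ofPred_eq, not_lt, not_and'] at hp
    simp only [Set.mem_ofPred_eq, not_not]
    exact interpolatesWithin_of_norm_le Fintype.card_pos hδ₁ hs hp.1 fun hV ↦
      hp.2 (by exact_mod_cast hV)
  refine (measureReal_mono hsub).trans ((measureReal_union_le _ _).trans (add_le_add ?_ ?_))
  · rw [measureReal_prod_prod, probReal_univ, mul_one]
    exact stdGaussian_lt_norm_mul_transpose_sub_le hδ₀ (by linarith)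
  · exact prod_stdGaussian_lt_abs_inner_le _ (measurable_interpolatorError _ y) s ht

end OneRow

section GaussSample

open scoped NNReal

variable {Ω : Type*} [MeasurableSpace Ω] {μ : Measure Ω}

lemma aemeasurable_toLp {ι : Type*} [Countable ι] {Y : ι → Ω → ℝ}
    (hmeas : ∀ i, AEMeasurable (Y i) μ) :
    AEMeasurable (fun ω ↦ WithLp.toLp 2 fun i ↦ Y i ω) μ :=
  (WithLp.measurable_toLp 2 _).comp_aemeasurable (aemeasurable_pi_lambda _ hmeas)

lemma map_toLp_eq_stdGaussian {ι : Type*} [Fintype ι] {Y : ι → Ω → ℝ}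
    (hmeas : ∀ i, AEMeasurable (Y i) μ) (hindep : iIndepFun Y μ)
    (hlaw : ∀ i, μ.map (Y i) = gaussianReal 0 1) :
    μ.map (fun ω ↦ WithLp.toLp 2 fun i ↦ Y i ω) = stdGaussian (EuclideanSpace ℝ ι) := by
  have := hindep.isProbabilityMeasure
  have hpi := (iIndepFun_iff_map_fun_eq_pi_map hmeas).mp hindep
  simp only [hlaw] at hpi
  rw [← map_pi_eq_stdGaussian, ← hpi, AEMeasurable.map_map_of_aemeasurable (by fun_prop)
    (by fun_prop)]
  rfl

variable {ι α β : Type*} {Y : ι → Ω → ℝ} {f : α → ι} {g : β → ι}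

lemma indepFun_toLp_comp [Finite α] [Finite β] (hmeas : ∀ i, AEMeasurable (Y i) μ)
    (hindep : iIndepFun Y μ) (hfg : ∀ a b, f a ≠ g b) :
    IndepFun (fun ω ↦ WithLp.toLp 2 fun a ↦ Y (f a) ω)
      (fun ω ↦ WithLp.toLp 2 fun b ↦ Y (g b) ω) μ := by
  classical
  cases nonempty_fintype α
  cases nonempty_fintype β
  have hdisj : Disjoint (Finset.univ.image f) (Finset.univ.image g) := by
    simpa [Finset.disjoint_left] using fun a b ↦ (hfg a b).symm
  exact (hindep.indepFun_finset₀ _ _ hdisj hmeas).comp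
    (φ := fun x ↦ WithLp.toLp 2 fun a ↦ x ⟨f a, by simp⟩)
    (ψ := fun x ↦ WithLp.toLp 2 fun b ↦ x ⟨g b, by simp⟩)
    ((WithLp.measurable_toLp 2 _).comp (measurable_pi_lambda _ fun _ ↦ measurable_pi_apply _))
    ((WithLp.measurable_toLp 2 _).comp (measurable_pi_lambda _ fun _ ↦ measurable_pi_apply _))

lemma map_toLp_prodMk_toLp_eq_stdGaussian_prod [Fintype α] [Fintype β]
    (hmeas : ∀ i, AEMeasurable (Y i) μ) (hindep : iIndepFun Y μ)
    (hlaw : ∀ i, μ.map (Y i) = gaussianReal 0 1)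
    (hf : f.Injective) (hg : g.Injective) (hfg : ∀ a b, f a ≠ g b) :
    μ.map (fun ω ↦ (WithLp.toLp 2 fun a ↦ Y (f a) ω, WithLp.toLp 2 fun b ↦ Y (g b) ω)) =
      (stdGaussian (EuclideanSpace ℝ α)).prod (stdGaussian (EuclideanSpace ℝ β)) := by
  have := hindep.isProbabilityMeasure
  rw [(indepFun_iff_map_prod_eq_prod_map_map (aemeasurable_toLp fun a ↦ hmeas (f a))
      (aemeasurable_toLp fun b ↦ hmeas (g b))).mp (indepFun_toLp_comp hmeas hindep hfg),
    map_toLp_eq_stdGaussian (fun a ↦ hmeas (f a)) (hindep.precomp hf) fun a ↦ hlaw (f a),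
    map_toLp_eq_stdGaussian (fun b ↦ hmeas (g b)) (hindep.precomp hg) fun b ↦ hlaw (g b)]

variable {n d : ℕ} {X : Ω → Matrix (Fin n) (Fin d) ℝ}

lemma IsGaussSample.map_rowDel_prodMk_row (hX : IsGaussSample μ X) (i : Fin n) :
    μ.map (fun ω ↦ (WithLp.toLp 2 fun p : {j // j ≠ i} × Fin d ↦ X ω p.1 p.2,
      WithLp.toLp 2 (X ω i))) =
      (stdGaussian (EuclideanSpace ℝ ({j // j ≠ i} × Fin d))).prod
        (stdGaussian (EuclideanSpace ℝ (Fin d))) :=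
  map_toLp_prodMk_toLp_eq_stdGaussian_prod (f := Prod.map Subtype.val id) (g := Prod.mk i)
    (fun p ↦ (hX.meas p.1 p.2).aemeasurable) hX.indep (fun p ↦ hX.law p.1 p.2)
    (Subtype.val_injective.prodMap Function.injective_id) (Prod.mk_right_injective i)
    fun p _ hp ↦ p.1.2 (congrArg Prod.fst hp)

lemma IsGaussSample.not_interpolatesWithin_rowDel_le (hX : IsGaussSample μ X) (hd : 0 < d)
    (i : Fin n) (y : {j // j ≠ i} → ℝ) {δ t : ℝ} (s : ℝ≥0)
    (hδ₀ : 0 ≤ δ) (hδ₁ : δ ≤ 1 / 64) (ht : 0 ≤ t)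
    (hs : 6144 * δ ^ 2 / d * ‖WithLp.toLp 2 y‖ ^ 2 ≤ s) :
    μ.real {ω | ¬ InterpolatesWithin (rowDel (X ω) i) y (X ω i) t} ≤
      5 ^ n * (2 * Real.exp (-(δ ^ 2 * d / 16))) + 2 * Real.exp (-t ^ 2 / (2 * s)) := by
  have : Nonempty (Fin d) := ⟨⟨0, hd⟩⟩
  have hlaw := hX.map_rowDel_prodMk_row i
  have hbound := prod_stdGaussian_not_interpolatesWithin_le (κ := Fin d) y s hδ₀ hδ₁ ht (by simpa)
  have hcard : Fintype.card {j // j ≠ i} ≤ n := (Fintype.card_subtype_le _).trans_eq (by simp)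
  rw [← hlaw, Fintype.card_fin] at hbound
  have hone : (1 : ℝ) ≤ 5 := by norm_num
  grw [hcard] at hbound
  have haemeas : AEMeasurable (fun ω ↦ (WithLp.toLp 2 fun p : {j // j ≠ i} × Fin d ↦ X ω p.1 p.2,
      WithLp.toLp 2 (X ω i))) μ :=
    AEMeasurable.of_map_ne_zero (hlaw ▸ IsProbabilityMeasure.ne_zero _)
  refine le_trans ?_ hbound
  exact ENNReal.toReal_mono (by rw [hlaw]; exact measure_ne_top _ _)
    (Measure.le_map_apply haemeas _)

end GaussSample

section AllRows

variable {Ω : Type*} [MeasurableSpace Ω] {μ : Measure Ω} {n d : ℕ}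
  {X : Ω → Matrix (Fin n) (Fin d) ℝ} {y : Fin n → ℝ}

lemma norm_toLp_vecDel_sq_le (hy : ∀ i, |y i| ≤ 1) (i : Fin n) :
    ‖WithLp.toLp 2 (vecDel y i)‖ ^ 2 ≤ n := by
  rw [EuclideanSpace.real_norm_sq_eq]
  calc ∑ j, vecDel y i j ^ 2 ≤ ∑ _j : {j // j ≠ i}, (1 : ℝ) :=
        Finset.sum_le_sum fun j _ ↦ (sq_le_one_iff_abs_le_one _).mpr (hy j)
    _ ≤ n := by
      rw [Finset.sum_const, nsmul_one, Nat.cast_le, Finset.card_univ]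
      exact (Fintype.card_subtype_le _).trans_eq (Fintype.card_fin n)

lemma IsGaussSample.exists_not_interpolatesWithin_le (hX : IsGaussSample μ X) (hd₀ : 0 < d)
    (hd : 262144 * n ≤ d) (hy : ∀ i, |y i| ≤ 1) {t : ℝ} (ht : 0 ≤ t) :
    μ.real {ω | ∃ i, ¬ InterpolatesWithin (rowDel (X ω) i) (vecDel y i) (X ω i) t} ≤
      n * (5 ^ n * (2 * Real.exp (-(4 * n))) +
        2 * Real.exp (-(t ^ 2 / (786432 * (n / d) ^ 2)))) := by
  have hd₀' : (0 : ℝ) < d := Nat.cast_pos.mpr hd₀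
  -- Then `δ ^ 2 * d / 16 = 4 * n`, which beats the `5 ^ n` points of the net, and
  -- `262144 = 64 * 64 ^ 2` yields `δ ≤ 1 / 64`.
  set δ := 8 * √(n / d : ℝ)
  have hδ : δ ^ 2 = 64 * (n / d) := by
    rw [mul_pow, Real.sq_sqrt (by positivity)]
    norm_num
  have hδ_le : δ ≤ 1 / 64 := by
    have hnd : (n / d : ℝ) ≤ 1 / 262144 := by
      rw [div_le_div_iff₀ hd₀' (by norm_num)]
      exact_mod_cast (by omega : n * 262144 ≤ 1 * d)
    exact (sq_le_sq₀ (by positivity) (by norm_num)).mp (by linarith)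
  have hrow (i : Fin n) :
      μ.real {ω | ¬ InterpolatesWithin (rowDel (X ω) i) (vecDel y i) (X ω i) t} ≤
        5 ^ n * (2 * Real.exp (-(4 * n))) +
          2 * Real.exp (-(t ^ 2 / (786432 * (n / d) ^ 2))) := by
    have hs : ((393216 * (n / d) ^ 2 : ℝ).toNNReal : ℝ) = 393216 * (n / d) ^ 2 :=
      Real.coe_toNNReal _ (by positivity)
    refine (hX.not_interpolatesWithin_rowDel_le hd₀ i (vecDel y i) (δ := δ)
      (393216 * (n / d) ^ 2 : ℝ).toNNReal (by positivity) hδ_le ht ?_).trans_eq ?_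
    · grw [hs, norm_toLp_vecDel_sq_le hy i, hδ]
      exact le_of_eq (by ring)
    · rw [hs, hδ, neg_div, ← mul_assoc 2 (393216 : ℝ), show (2 * 393216 : ℝ) = 786432 by norm_num,
        show 64 * (n / d) * d / 16 = (4 * n : ℝ) by field_simp; ring]
  rw [Set.ofPred_exists]
  refine (measureReal_iUnion_fintype_le _).trans ((Finset.sum_le_card_nsmul _ _ _ fun i _ ↦
    hrow i).trans_eq ?_)
  rw [Finset.card_univ, Fintype.card_fin, nsmul_eq_mul]

lemma natCast_mul_five_pow_mul_exp_le (n : ℕ) :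
    n * (5 ^ n * (2 * Real.exp (-(4 * n)))) ≤ 1 / (2 * n) := by
  rcases n.eq_zero_or_pos with rfl | hn
  · simp
  have hn' : (0 : ℝ) < n := Nat.cast_pos.mpr hn
  have hfive : (5 : ℝ) ^ n ≤ Real.exp (2 * n) := by
    rw [mul_comm, Real.exp_nat_mul]
    gcongr
    linarith [Real.quadratic_le_exp_of_nonneg (zero_le_two (α := ℝ))]
  have hexp : (2 * n) ^ 2 ≤ Real.exp (2 * n) := by
    rw [two_mul (n : ℝ), Real.exp_add, ← sq, ← two_mul]
    gcongr
    nlinarith [Real.quadratic_le_exp_of_nonneg hn'.le, sq_nonneg (n - 1 : ℝ)]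
  calc n * (5 ^ n * (2 * Real.exp (-(4 * n))))
      ≤ n * (Real.exp (2 * n) * (2 * Real.exp (-(4 * n)))) := by gcongr
    _ = 2 * n / Real.exp (2 * n) := by
        rw [show -(4 * n : ℝ) = -(2 * n) - 2 * n by ring, Real.exp_sub, Real.exp_neg]
        field_simp
    _ ≤ 2 * n / (2 * n) ^ 2 := by gcongr
    _ = 1 / (2 * n) := by field_simp

lemma natCast_mul_exp_le {n : ℕ} (hn : 4 ≤ n) {u : ℝ} (hu : 3 * Real.log n ≤ u) :
    n * (2 * Real.exp (-u)) ≤ 1 / (2 * n) := by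
  have hn' : (4 : ℝ) ≤ n := by exact_mod_cast hn
  calc n * (2 * Real.exp (-u)) ≤ n * (2 * Real.exp (-(3 * Real.log n))) := by gcongr
    _ = 2 / n ^ 2 := by
        rw [Real.exp_neg, mul_comm 3, Real.exp_mul, Real.exp_log (by linarith)]
        rw [Real.rpow_ofNat]
        field_simp
    _ ≤ 1 / (2 * n) := by
        rw [div_le_div_iff₀ (by positivity) (by positivity)]
        nlinarith

lemma ofReal_one_sub_le_measure [IsProbabilityMeasure μ] {s : Set Ω} {p : ℝ} (h : μ.real sᶜ ≤ p) :
    ENNReal.ofReal (1 - p) ≤ μ s := by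
  have hunion : 1 ≤ μ.real s + μ.real sᶜ := by
    rw [← probReal_univ (μ := μ), ← Set.union_compl_self s]
    exact measureReal_union_le _ _
  rw [← ofReal_measureReal]
  exact ENNReal.ofReal_le_ofReal (by linarith)

lemma IsGaussSample.exists_not_interpolatesWithin_le_one_div (hX : IsGaussSample μ X) (hn : 4 ≤ n)
    (hd : 262144 * n ≤ d) (hy : ∀ i, |y i| ≤ 1) {t : ℝ} (ht : 0 ≤ t)
    (htn : 3 * Real.log n * (786432 * (n / d) ^ 2) ≤ t ^ 2) :
    μ.real {ω | ∃ i, ¬ InterpolatesWithin (rowDel (X ω) i) (vecDel y i) (X ω i) t} ≤ 1 / n := by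
  have hd₀ : 0 < d := by omega
  have hu : 3 * Real.log n ≤ t ^ 2 / (786432 * (n / d) ^ 2) :=
    (le_div_iff₀ (by positivity)).mpr htn
  refine (hX.exists_not_interpolatesWithin_le hd₀ hd hy ht).trans ?_
  rw [mul_add]
  refine (add_le_add (natCast_mul_five_pow_mul_exp_le n) (natCast_mul_exp_le hn hu)).trans_eq ?_
  field_simp
  norm_num

lemma three_mul_log_mul_div_sq_le {C c ε : ℝ} (hC : 0 < C) (hc : 0 < c) (hn : 0 < n)
    (hlog : 0 < Real.log n) (hd : c * n * Real.log n ≤ d)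
    (hε : 3072 * C / c / √(Real.log n) ≤ ε) :
    3 * Real.log n * (786432 * (n / d) ^ 2) ≤ (ε / (2 * C)) ^ 2 := by
  have : (0 : ℝ) < n := Nat.cast_pos.mpr hn
  calc 3 * Real.log n * (786432 * (n / d) ^ 2)
      ≤ 3 * Real.log n * (786432 * (n / (c * n * Real.log n)) ^ 2) := by gcongr
    _ = 1536 ^ 2 / (c ^ 2 * Real.log n) := by
        field_simp
        norm_num
    _ = (3072 * C / c / √(Real.log n) / (2 * C)) ^ 2 := by
        rw [div_pow, div_pow, div_pow, mul_pow, mul_pow, Real.sq_sqrt hlog.le]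
        field_simp
        norm_num
    _ ≤ (ε / (2 * C)) ^ 2 := by gcongr

end AllRows

theorem stmt13_general :
    ∀ C₀ > (0 : ℝ), ∀ c₁ > (0 : ℝ), ∃ C₂ > (0 : ℝ), ∃ n₀ : ℕ, ∀ n ≥ n₀, ∀ ε : ℝ,
      C₂ / √(Real.log n) ≤ ε → ∀ d : ℕ, c₁ * n * Real.log n ≤ d →
      ∀ (Ω : Type*) (_ : MeasurableSpace Ω) (μ : Measure Ω)
        (X : Ω → Matrix (Fin n) (Fin d) ℝ) (y : Fin n → ℝ),
        (∀ i, |y i| ≤ 1) → IsGaussSample μ X →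
        ENNReal.ofReal (1 - 1 / n) ≤
          μ {ω | ∀ i : Fin n, IsUnit (rowDel (X ω) i * (rowDel (X ω) i)ᵀ).det ∧
            |y i * (vecDel y i ⬝ᵥ (((rowDel (X ω) i * (rowDel (X ω) i)ᵀ)⁻¹ - (d : ℝ)⁻¹ • 1) *ᵥ
              (rowDel (X ω) i *ᵥ X ω i)))| ≤ ε / (2 * C₀)} := by
  intro C₀ hC₀ c₁ hc₁
  refine ⟨3072 * C₀ / c₁, by positivity, max 4 ⌈Real.exp (262144 / c₁)⌉₊, ?_⟩
  intro n hn ε hε d hd Ω _ μ X y hy hX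
  have := hX.indep.isProbabilityMeasure
  have hn₄ : 4 ≤ n := le_of_max_le_left hn
  have hlog : 262144 / c₁ ≤ Real.log n :=
    (Real.le_log_iff_exp_le (by positivity)).mpr (Nat.ceil_le.mp (le_of_max_le_right hn))
  have hlog₀ : 0 < Real.log n := lt_of_lt_of_le (by positivity) hlog
  have hdn : 262144 * n ≤ d := by
    rw [div_le_iff₀' hc₁] at hlog
    have : (262144 : ℝ) * n ≤ d := by nlinarith
    exact_mod_cast this
  have hε₀ : 0 ≤ ε := le_trans (by positivity) hε
  have hbad := hX.exists_not_interpolatesWithin_le_one_div hn₄ hdn hy (t := ε / (2 * C₀))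
    (by positivity) (three_mul_log_mul_div_sq_le hC₀ hc₁ (by omega) hlog₀ hd hε)
  refine (ofReal_one_sub_le_measure (s := {ω | ∀ i, InterpolatesWithin (rowDel (X ω) i)
    (vecDel y i) (X ω i) (ε / (2 * C₀))}) ?_).trans (measure_mono fun ω hω i ↦ ?_)
  · simpa only [Set.compl_ofPred, not_forall] using hbad
  · obtain ⟨hunit, hle⟩ := hω i
    rw [Fintype.card_fin] at hle
    exact ⟨hunit, (abs_mul _ _).trans_le
      ((mul_le_of_le_one_left (abs_nonneg _) (hy i)).trans hle)⟩

/-- First claim of Lemma 5 (asymptotic-lb1): below the threshold `d = ⌈(2−ε) n ln n⌉`, with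
probability at least `1 − 1/n`, all leave-one-out Gram matrices `K₋ᵢ`, `i ∈ [m]`, are
invertible and `max_{i ∈ [m]} |yᵢ y₋ᵢᵀ (K₋ᵢ⁻¹ − d⁻¹ I) X₋ᵢ xᵢ| ≤ ε/(2C₀)`,
where `m = ⌊n / ln n⌋`. -/
theorem stmt13 :
    ∀ C₀ > (0 : ℝ), ∀ c₁ : ℝ, 0 < c₁ → c₁ < 2 →
    ∃ C₂ > (0 : ℝ), ∃ n₀ : ℕ, ∀ n ≥ n₀, ∀ ε : ℝ,
      C₂ / Real.sqrt (Real.log n) ≤ ε → ε ≤ 2 - c₁ →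
      ∀ (Ω : Type*) (_ : MeasurableSpace Ω) (μ : Measure Ω), IsProbabilityMeasure μ →
      ∀ (X : Ω → Matrix (Fin n) (Fin ⌈(2 - ε) * n * Real.log n⌉₊) ℝ) (y : Fin n → ℝ),
        (∀ i, y i = 1 ∨ y i = -1) → IsGaussSample μ X →
        ENNReal.ofReal (1 - 1 / n) ≤
          μ {ω | ∀ i : Fin n, (i : ℕ) < ⌊(n : ℝ) / Real.log n⌋₊ →
              IsUnit (rowDel (X ω) i * (rowDel (X ω) i)ᵀ).det ∧
              |y i * (vecDel y i ⬝ᵥ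
                (((rowDel (X ω) i * (rowDel (X ω) i)ᵀ)⁻¹ -
                    ((⌈(2 - ε) * n * Real.log n⌉₊ : ℝ))⁻¹ • 1) *ᵥ
                  (rowDel (X ω) i *ᵥ X ω i)))| ≤ ε / (2 * C₀)} := by
  intro C₀ hC₀ c₁ hc₁ _
  obtain ⟨C₂, hC₂, n₀, h⟩ := stmt13_general C₀ hC₀ c₁ hc₁
  refine ⟨C₂, hC₂, n₀, fun n hn ε hε hε' Ω _ μ _ X y hy hX ↦
    (h n hn ε hε _ (le_trans ?_ (Nat.le_ceil _)) Ω _ μ X y (fun i ↦ ?_) hX).trans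
      (measure_mono fun ω hω i _ ↦ hω i)⟩
  · gcongr
    linarith
  · rcases hy i with hi | hi <;> simp [hi]

end
end

section
/- For any C₀ > 0 and c₁ ∈ (0, 2) there exist C₂ > 0 and n₀ > 0 such that for all n ≥ n₀ and all ε with C₂/√(log n) ≤ ε ≤ 2 − c₁, the following holds with d = ⌈(2 − ε) n ln n⌉ and m = ⌊n / ln n⌋. Let (X, y) be an isotropic Gaussian sample of size n in dimension d with rows x₁,…,xₙ. Then with probability at least 1 − 1/n, max_{i ∈ [m]} | (1/d) y_i y_{[m]∖i}ᵀ X_{[m]∖i} x_i | ≤ ε / (2 C₀), where X_{[m]∖i} ∈ ℝ^{(m−1)×d} and y_{[m]∖i} ∈ ℝ^{m−1} consist of the first m rows/entries of X and y with the i-th removed. -/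
open MeasureTheory ProbabilityTheory Matrix

noncomputable section

/-!
The `k`-th coordinate contributes `X i k * ∑ j ∈ J, y j * X j k` to `∑ j ∈ J, y j * ⟨x j, x i⟩`: a
standard Gaussian times an independent sub-Gaussian variable with variance proxy
`S = ∑ j ∈ J, y j ^ 2`. Averaging over the second factor first turns the moment generating function
at `t` into that of a squared Gaussian, so it is at most `(1 - S t²)^(-1/2) ≤ exp (S t²)` when
`S t² ≤ 1/2`. Different coordinates are independent, hence the full sum has the Bernstein tail
`2 exp (-d δ² / (4 M))` at `d δ` whenever `S ≤ M` and `δ² ≤ 2 M`. With `M = n / log n`,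
`d ≥ c n log n` and `δ² = 12 / (c log n)` the exponent is at least `3 log n`, which leaves room for
a union bound over all `n` rows.
-/

open scoped NNReal

section GaussianSquare

variable {v : ℝ≥0} {s : ℝ}

lemma gaussianPDFReal_zero_mul_exp_mul_sq (hv : v ≠ 0) (x : ℝ) :
    gaussianPDFReal 0 v x * Real.exp (s * x ^ 2) =
      (√(2 * Real.pi * v))⁻¹ * Real.exp (-((1 - 2 * v * s) / (2 * v)) * x ^ 2) := by
  rw [gaussianPDFReal, mul_assoc, ← Real.exp_add]
  congr 2
  field_simp
  ring

lemma integrable_exp_mul_sq_gaussianReal (hs : 2 * v * s < 1) :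
    Integrable (fun x ↦ Real.exp (s * x ^ 2)) (gaussianReal 0 v) := by
  rcases eq_or_ne v 0 with rfl | hv
  · simp [integrable_dirac]
  have hb : 0 < (1 - 2 * v * s) / (2 * v) := by have := sub_pos.2 hs; positivity
  rw [gaussianReal_of_var_ne_zero _ hv, gaussianPDF_def,
    integrable_withDensity_iff_integrable_smul' (by fun_prop) (by simp)]
  simp only [ENNReal.toReal_ofReal (gaussianPDFReal_nonneg _ _ _), smul_eq_mul,
    gaussianPDFReal_zero_mul_exp_mul_sq hv]
  exact (integrable_exp_neg_mul_sq hb).const_mul _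

lemma mgf_sq_gaussianReal (hs : 2 * v * s < 1) :
    mgf (fun x ↦ x ^ 2) (gaussianReal 0 v) s = (√(1 - 2 * v * s))⁻¹ := by
  rcases eq_or_ne v 0 with rfl | hv
  · simp [mgf]
  have hs' : 0 < 1 - 2 * v * s := sub_pos.2 hs
  simp only [mgf, integral_gaussianReal_eq_integral_smul hv, smul_eq_mul,
    gaussianPDFReal_zero_mul_exp_mul_sq hv]
  rw [integral_const_mul, integral_gaussian, ← Real.sqrt_inv, ← Real.sqrt_inv,
    ← Real.sqrt_mul (by positivity)]
  congr 1
  field_simp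

end GaussianSquare

lemma inv_sqrt_one_sub_le_exp {u : ℝ} (hu₀ : 0 ≤ u) (hu : u ≤ 1 / 2) :
    (√(1 - u))⁻¹ ≤ Real.exp u := by
  have hpos : 0 < 1 - u := by linarith
  rw [inv_le_comm₀ (Real.sqrt_pos.2 hpos) (Real.exp_pos _), ← Real.exp_neg]
  apply Real.le_sqrt_of_sq_le
  have hexp : (1 + u) ^ 2 ≤ Real.exp u ^ 2 := by
    gcongr
    linarith [Real.add_one_le_exp u]
  rw [Real.exp_neg, inv_pow, inv_le_comm₀ (by positivity) hpos]
  refine le_trans ?_ hexp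
  rw [inv_le_iff_one_le_mul₀ hpos]
  nlinarith [mul_nonneg hu₀ (sub_nonneg.2 hu), mul_nonneg hu₀ hu₀]

section SubgaussianMulProd

variable {ν ρ : Measure ℝ} {c : ℝ≥0} {t : ℝ}

lemma integral_exp_mul_mul_le_exp_sq (hρ : HasSubgaussianMGF id c ρ) (t z : ℝ) :
    ∫ y, Real.exp (t * (z * y)) ∂ρ ≤ Real.exp (c * t ^ 2 / 2 * z ^ 2) := by
  have hmgf := hρ.mgf_le (t * z)
  simp only [mgf, id_eq, mul_assoc] at hmgf
  refine hmgf.trans_eq ?_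
  congr 1
  ring

variable [SFinite ρ]

lemma integrable_exp_mul_mul_prod (hρ : HasSubgaussianMGF id c ρ)
    (hν : Integrable (fun z ↦ Real.exp (c * t ^ 2 / 2 * z ^ 2)) ν) :
    Integrable (fun p : ℝ × ℝ ↦ Real.exp (t * (p.1 * p.2))) (ν.prod ρ) := by
  have hmeas : AEStronglyMeasurable (fun p : ℝ × ℝ ↦ Real.exp (t * (p.1 * p.2))) (ν.prod ρ) := by
    fun_prop
  rw [integrable_prod_iff hmeas]
  refine ⟨ae_of_all _ fun z ↦ ?_, hν.mono' hmeas.norm.integral_prod_right' (ae_of_all _ fun z ↦ ?_)⟩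
  · simpa only [id_eq, mul_assoc] using hρ.integrable_exp_mul (t * z)
  · simp only [Real.norm_eq_abs, Real.abs_exp]
    rw [abs_of_nonneg (integral_nonneg fun _ ↦ (Real.exp_pos _).le)]
    exact integral_exp_mul_mul_le_exp_sq hρ t z

lemma mgf_mul_prod_le_mgf_sq [SFinite ν] (hρ : HasSubgaussianMGF id c ρ)
    (hν : Integrable (fun z ↦ Real.exp (c * t ^ 2 / 2 * z ^ 2)) ν) :
    mgf (fun p : ℝ × ℝ ↦ p.1 * p.2) (ν.prod ρ) t ≤ mgf (fun z ↦ z ^ 2) ν (c * t ^ 2 / 2) := by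
  have hint := integrable_exp_mul_mul_prod hρ hν
  rw [mgf, integral_prod _ hint]
  exact integral_mono hint.integral_prod_left hν fun z ↦ integral_exp_mul_mul_le_exp_sq hρ t z

end SubgaussianMulProd

/-- A real random variable is sub-exponential with variance proxy `c` and radius `r` if its moment
generating function satisfies the sub-Gaussian bound `exp (c * t ^ 2 / 2)` for `|t| ≤ r`; this is
what Bernstein's inequality needs. -/
structure HasSubexponentialMGF {Ω : Type*} [MeasurableSpace Ω] (X : Ω → ℝ) (c r : ℝ)
    (μ : Measure Ω) : Prop where
  integrable_exp_mul : ∀ t, |t| ≤ r → Integrable (fun ω ↦ Real.exp (t * X ω)) μ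
  mgf_le : ∀ t, |t| ≤ r → mgf X μ t ≤ Real.exp (c * t ^ 2 / 2)

namespace HasSubexponentialMGF

variable {Ω : Type*} [MeasurableSpace Ω] {μ : Measure Ω} {X : Ω → ℝ} {c c' r : ℝ}

lemma neg (h : HasSubexponentialMGF X c r μ) : HasSubexponentialMGF (-X) c r μ where
  integrable_exp_mul t ht := by
    simpa only [Pi.neg_apply, mul_neg, neg_mul] using
      h.integrable_exp_mul (-t) ((abs_neg t).trans_le ht)
  mgf_le t ht := by
    simpa only [mgf_neg, neg_sq] using h.mgf_le (-t) ((abs_neg t).trans_le ht)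

lemma mono (h : HasSubexponentialMGF X c r μ) (hc : c ≤ c') : HasSubexponentialMGF X c' r μ where
  integrable_exp_mul := h.integrable_exp_mul
  mgf_le t ht := (h.mgf_le t ht).trans (by gcongr)

lemma sum_of_iIndepFun {ι : Type*} {X : ι → Ω → ℝ} (hindep : iIndepFun X μ)
    (hmeas : ∀ i, Measurable (X i)) {c : ι → ℝ} {s : Finset ι}
    (h : ∀ i ∈ s, HasSubexponentialMGF (X i) (c i) r μ) :
    HasSubexponentialMGF (∑ i ∈ s, X i) (∑ i ∈ s, c i) r μ where
  integrable_exp_mul t ht := by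
    have := hindep.isProbabilityMeasure
    exact hindep.integrable_exp_mul_sum hmeas fun i hi ↦ (h i hi).integrable_exp_mul t ht
  mgf_le t ht := by
    rw [hindep.mgf_sum hmeas, Finset.sum_mul, Finset.sum_div, Real.exp_sum]
    exact Finset.prod_le_prod (fun _ _ ↦ mgf_nonneg) fun i hi ↦ (h i hi).mgf_le t ht

variable [IsFiniteMeasure μ] {a : ℝ}

lemma measureReal_ge_le (h : HasSubexponentialMGF X c r μ) (hc : 0 < c) (ha : 0 ≤ a)
    (har : a ≤ c * r) : μ.real {ω | a ≤ X ω} ≤ Real.exp (-(a ^ 2 / (2 * c))) := by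
  have ht : |a / c| ≤ r := by
    rwa [abs_of_nonneg (by positivity), div_le_iff₀' hc]
  calc μ.real {ω | a ≤ X ω}
      ≤ Real.exp (-(a / c) * a) * mgf X μ (a / c) :=
        measure_ge_le_exp_mul_mgf a (by positivity) (h.integrable_exp_mul _ ht)
    _ ≤ Real.exp (-(a / c) * a) * Real.exp (c * (a / c) ^ 2 / 2) := by
        gcongr
        exact h.mgf_le _ ht
    _ = Real.exp (-(a ^ 2 / (2 * c))) := by
        rw [← Real.exp_add]
        congr 1
        field_simp
        ring

lemma measureReal_abs_ge_le (h : HasSubexponentialMGF X c r μ) (hc : 0 < c) (ha : 0 ≤ a)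
    (har : a ≤ c * r) : μ.real {ω | a ≤ |X ω|} ≤ 2 * Real.exp (-(a ^ 2 / (2 * c))) := by
  have hsplit : {ω | a ≤ |X ω|} = {ω | a ≤ X ω} ∪ {ω | a ≤ (-X) ω} :=
    Set.ext fun ω ↦ le_abs (b := X ω)
  rw [hsplit, two_mul]
  exact (measureReal_union_le _ _).trans
    (add_le_add (h.measureReal_ge_le hc ha har) (h.neg.measureReal_ge_le hc ha har))

end HasSubexponentialMGF

lemma hasSubexponentialMGF_mul_of_gaussian_of_subgaussian {Ω : Type*} [MeasurableSpace Ω]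
    {μ : Measure Ω} [IsFiniteMeasure μ] {Z Y : Ω → ℝ} {v c : ℝ≥0} {r : ℝ}
    (hindep : IndepFun Z Y μ) (hZ : HasLaw Z (gaussianReal 0 v) μ) (hY : HasSubgaussianMGF Y c μ)
    (hr : 2 * (v * c) * r ^ 2 ≤ 1) : HasSubexponentialMGF (Z * Y) (2 * (v * c)) r μ := by
  have hlaw : μ.map (fun ω ↦ (Z ω, Y ω)) = (gaussianReal 0 v).prod (μ.map Y) := by
    rw [(indepFun_iff_map_prod_eq_prod_map_map hZ.aemeasurable hY.aemeasurable).1 hindep, hZ.map_eq]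
  have hpair : AEMeasurable (fun ω ↦ (Z ω, Y ω)) μ := hZ.aemeasurable.prodMk hY.aemeasurable
  have hρ : HasSubgaussianMGF id c (μ.map Y) := (HasSubgaussianMGF.id_map_iff hY.aemeasurable).2 hY
  have hsmall {t : ℝ} (ht : |t| ≤ r) : v * c * t ^ 2 ≤ 1 / 2 := by
    have hsq : t ^ 2 ≤ r ^ 2 := sq_le_sq' (abs_le.1 ht).1 (abs_le.1 ht).2
    have : v * c * t ^ 2 ≤ v * c * r ^ 2 := by gcongr
    linarith
  have hgauss {t : ℝ} (ht : |t| ≤ r) : 2 * v * (c * t ^ 2 / 2) < 1 := by linarith [hsmall ht]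
  refine ⟨fun t ht ↦ ?_, fun t ht ↦ ?_⟩
  · have := integrable_exp_mul_mul_prod hρ (integrable_exp_mul_sq_gaussianReal (hgauss ht))
    rw [← hlaw] at this
    exact this.comp_aemeasurable hpair
  · calc mgf (Z * Y) μ t
        = mgf (fun p : ℝ × ℝ ↦ p.1 * p.2) ((gaussianReal 0 v).prod (μ.map Y)) t := by
          rw [← hlaw, mgf_map hpair (by fun_prop)]
          rfl
      _ ≤ mgf (fun z ↦ z ^ 2) (gaussianReal 0 v) (c * t ^ 2 / 2) :=
          mgf_mul_prod_le_mgf_sq hρ (integrable_exp_mul_sq_gaussianReal (hgauss ht))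
      _ = (√(1 - v * c * t ^ 2))⁻¹ := by
          rw [mgf_sq_gaussianReal (hgauss ht)]
          congr 3
          ring
      _ ≤ Real.exp (v * c * t ^ 2) := inv_sqrt_one_sub_le_exp (by positivity) (hsmall ht)
      _ = Real.exp (2 * (v * c) * t ^ 2 / 2) := by
          congr 1
          ring

lemma iIndepFun_curry {Ω ι κ 𝓧 : Type*} [MeasurableSpace Ω] {μ : Measure Ω} [MeasurableSpace 𝓧]
    {X : ι → κ → Ω → 𝓧} (hX : ∀ i j, Measurable (X i j))
    (h : iIndepFun (fun (p : ι × κ) ↦ X p.1 p.2) μ) :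
    iIndepFun (fun i ω j ↦ X i j ω) μ := by
  have := h.isProbabilityMeasure
  have (i : ι) (j : κ) : IsProbabilityMeasure (μ.map (X i j)) :=
    Measure.isProbabilityMeasure_map (hX i j).aemeasurable
  have hjoint : μ.map (fun ω (p : ι × κ) ↦ X p.1 p.2 ω) =
      Measure.infinitePi fun p : ι × κ ↦ μ.map (X p.1 p.2) :=
    h.map_fun_eq_infinitePi_map fun p ↦ hX p.1 p.2
  have hrow (i : ι) : μ.map (fun ω j ↦ X i j ω) = Measure.infinitePi fun j ↦ μ.map (X i j) :=
    (h.precomp (Prod.mk_right_injective i)).map_fun_eq_infinitePi_map (hX i)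
  rw [iIndepFun_iff_map_fun_eq_infinitePi_map (by fun_prop)]
  simp_rw [hrow]
  rw [← Measure.infinitePi_map_curry fun i j ↦ μ.map (X i j), ← hjoint,
    Measure.map_map (MeasurableEquiv.measurable _) (by fun_prop)]
  rfl

lemma one_sub_card_mul_le_measureReal_forall {Ω ι : Type*} [MeasurableSpace Ω] {μ : Measure Ω}
    [IsProbabilityMeasure μ] [Fintype ι] {p : ι → Ω → Prop} {q : ℝ}
    (h : ∀ i, μ.real {ω | ¬ p i ω} ≤ q) :
    1 - Fintype.card ι * q ≤ μ.real {ω | ∀ i, p i ω} := by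
  have hcover : {ω | ∀ i, p i ω} ∪ ⋃ i, {ω | ¬ p i ω} = Set.univ := by
    ext ω
    simp [← not_forall, em]
  have hunion : μ.real (⋃ i, {ω | ¬ p i ω}) ≤ Fintype.card ι * q :=
    calc μ.real (⋃ i, {ω | ¬ p i ω}) ≤ ∑ i, μ.real {ω | ¬ p i ω} := measureReal_iUnion_fintype_le _
      _ ≤ ∑ _i : ι, q := Finset.sum_le_sum fun i _ ↦ h i
      _ = Fintype.card ι * q := by simp
  have htotal := measureReal_union_le (μ := μ) {ω | ∀ i, p i ω} (⋃ i, {ω | ¬ p i ω})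
  rw [hcover, probReal_univ] at htotal
  linarith

namespace IsGaussSample

variable {Ω : Type*} [MeasurableSpace Ω] {μ : Measure Ω} {n d : ℕ}
  {X : Ω → Matrix (Fin n) (Fin d) ℝ}

lemma isProbabilityMeasure (hX : IsGaussSample μ X) : IsProbabilityMeasure μ :=
  hX.indep.isProbabilityMeasure

lemma hasLaw (hX : IsGaussSample μ X) (i : Fin n) (k : Fin d) :
    HasLaw (fun ω ↦ X ω i k) (gaussianReal 0 1) μ :=
  ⟨(hX.meas i k).aemeasurable, hX.law i k⟩

lemma hasSubgaussianMGF (hX : IsGaussSample μ X) (i : Fin n) (k : Fin d) :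
    HasSubgaussianMGF (fun ω ↦ X ω i k) 1 μ where
  integrable_exp_mul t := by
    have := integrable_exp_mul_gaussianReal (μ := 0) (v := 1) t
    rw [← hX.law i k] at this
    exact this.comp_measurable (hX.meas i k)
  mgf_le t := by simp [mgf_gaussianReal (hX.law i k)]

lemma iIndepFun_columns (hX : IsGaussSample μ X) : iIndepFun (fun k ω j ↦ X ω j k) μ :=
  iIndepFun_curry (fun k j ↦ hX.meas j k) (hX.indep.precomp Prod.swap_injective)

lemma iIndepFun_column (hX : IsGaussSample μ X) (k : Fin d) : iIndepFun (fun j ω ↦ X ω j k) μ :=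
  hX.indep.precomp (Prod.mk_left_injective k)

variable {i : Fin n} {J : Finset (Fin n)} {r M δ : ℝ}

lemma hasSubgaussianMGF_sum_mul (hX : IsGaussSample μ X) (y : Fin n → ℝ) (J : Finset (Fin n))
    (k : Fin d) :
    HasSubgaussianMGF (fun ω ↦ ∑ j ∈ J, y j * X ω j k) (∑ j ∈ J, ‖y j‖₊ ^ 2) μ := by
  have hindep : iIndepFun (fun j ω ↦ y j * X ω j k) μ :=
    (hX.iIndepFun_column k).comp (fun j x ↦ y j * x) fun j ↦ by fun_prop
  refine HasSubgaussianMGF.sum_of_iIndepFun hindep fun j _ ↦ ?_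
  convert! (hX.hasSubgaussianMGF j k).const_mul (y j) using 1
  ext
  simp only [NNReal.coe_pow, coe_nnnorm, Real.norm_eq_abs, sq_abs]
  exact (mul_one _).symm

lemma indepFun_entry_sum (hX : IsGaussSample μ X) (y : Fin n → ℝ) (hi : i ∉ J) (k : Fin d) :
    IndepFun (fun ω ↦ X ω i k) (fun ω ↦ ∑ j ∈ J, y j * X ω j k) μ := by
  have h := (hX.iIndepFun_column k).indepFun_finset {i} J (by simpa) fun j ↦ hX.meas j k
  have hentry : Measurable fun x : ({i} : Finset (Fin n)) → ℝ ↦ x ⟨i, by simp⟩ :=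
    measurable_pi_apply _
  have hsum : Measurable fun x : J → ℝ ↦ ∑ j : J, y j * x j := by fun_prop
  simp_rw [← Finset.sum_coe_sort J]
  exact h.comp hentry hsum

lemma hasSubexponentialMGF_mul_sum (hX : IsGaussSample μ X) (y : Fin n → ℝ) (hi : i ∉ J)
    (hr : 2 * (∑ j ∈ J, y j ^ 2) * r ^ 2 ≤ 1) (k : Fin d) :
    HasSubexponentialMGF (fun ω ↦ X ω i k * ∑ j ∈ J, y j * X ω j k) (2 * ∑ j ∈ J, y j ^ 2) r μ := by
  have := hX.isProbabilityMeasure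
  simpa using! hasSubexponentialMGF_mul_of_gaussian_of_subgaussian (r := r)
    (hX.indepFun_entry_sum y hi k) (hX.hasLaw i k) (hX.hasSubgaussianMGF_sum_mul y J k)
    (by simpa using hr)

lemma hasSubexponentialMGF_sum_dotProduct (hX : IsGaussSample μ X) (y : Fin n → ℝ) (hi : i ∉ J)
    (hr : 2 * (∑ j ∈ J, y j ^ 2) * r ^ 2 ≤ 1) :
    HasSubexponentialMGF (fun ω ↦ ∑ j ∈ J, y j * (X ω j ⬝ᵥ X ω i))
      (d * (2 * ∑ j ∈ J, y j ^ 2)) r μ := by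
  have hmeas := hX.meas
  have hindep : iIndepFun (fun k ω ↦ X ω i k * ∑ j ∈ J, y j * X ω j k) μ :=
    hX.iIndepFun_columns.comp (fun _ x ↦ x i * ∑ j ∈ J, y j * x j) fun _ ↦ by fun_prop
  have hsum := HasSubexponentialMGF.sum_of_iIndepFun hindep (fun k ↦ by fun_prop)
    (s := Finset.univ) fun k _ ↦ hX.hasSubexponentialMGF_mul_sum y hi hr k
  convert hsum using 1
  · ext ω
    simp only [dotProduct, Finset.sum_apply, Finset.mul_sum]
    rw [Finset.sum_comm]
    exact Finset.sum_congr rfl fun k _ ↦ Finset.sum_congr rfl fun j _ ↦ by ring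
  · simp

lemma measureReal_le_abs_sum_dotProduct_le (hX : IsGaussSample μ X) {y : Fin n → ℝ} (hi : i ∉ J)
    (hd : 0 < d) (hM : 0 < M) (hy : ∑ j ∈ J, y j ^ 2 ≤ M) (hδ : 0 ≤ δ) (hδM : δ ^ 2 ≤ 2 * M) :
    μ.real {ω | d * δ ≤ |∑ j ∈ J, y j * (X ω j ⬝ᵥ X ω i)|} ≤
      2 * Real.exp (-(d * δ ^ 2 / (4 * M))) := by
  have := hX.isProbabilityMeasure
  have hd' : (0 : ℝ) < d := Nat.cast_pos.2 hd
  have hr : 2 * (∑ j ∈ J, y j ^ 2) * (δ / (2 * M)) ^ 2 ≤ 1 :=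
    calc 2 * (∑ j ∈ J, y j ^ 2) * (δ / (2 * M)) ^ 2 ≤ 2 * M * (δ / (2 * M)) ^ 2 := by gcongr
      _ = δ ^ 2 / (2 * M) := by field_simp
      _ ≤ 1 := div_le_one_of_le₀ hδM (by positivity)
  have hsub := (hX.hasSubexponentialMGF_sum_dotProduct y hi hr).mono
    (c' := d * (2 * M)) (by gcongr)
  have htail := hsub.measureReal_abs_ge_le (a := d * δ) (by positivity) (by positivity)
    (by field_simp; rfl)
  convert htail using 4
  field_simp
  norm_num

lemma one_sub_le_measureReal_forall_abs_le (hX : IsGaussSample μ X) {y : Fin n → ℝ}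
    (hy : ∀ i, |y i| ≤ 1) {J : Fin n → Finset (Fin n)} (hJ : ∀ i, i ∉ J i)
    (hJM : ∀ i, ((J i).card : ℝ) ≤ M) (hd : 0 < d) (hM : 0 < M) (hδ : 0 ≤ δ)
    (hδM : δ ^ 2 ≤ 2 * M) :
    1 - n * (2 * Real.exp (-(d * δ ^ 2 / (4 * M)))) ≤
      μ.real {ω | ∀ i, |(d : ℝ)⁻¹ * (y i * ∑ j ∈ J i, y j * (X ω j ⬝ᵥ X ω i))| ≤ δ} := by
  have := hX.isProbabilityMeasure
  have hd' : (0 : ℝ) < d := Nat.cast_pos.2 hd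
  have hsq (i : Fin n) : ∑ j ∈ J i, y j ^ 2 ≤ M :=
    calc ∑ j ∈ J i, y j ^ 2 ≤ ∑ _j ∈ J i, (1 : ℝ) :=
          Finset.sum_le_sum fun j _ ↦ (sq_le_one_iff_abs_le_one _).2 (hy j)
      _ ≤ M := by simpa using hJM i
  have hunion := one_sub_card_mul_le_measureReal_forall (μ := μ)
    (p := fun i ω ↦ |∑ j ∈ J i, y j * (X ω j ⬝ᵥ X ω i)| < d * δ) fun i ↦ by
      simpa only [not_lt] using
        hX.measureReal_le_abs_sum_dotProduct_le (hJ i) hd hM (hsq i) hδ hδM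
  rw [Fintype.card_fin] at hunion
  refine hunion.trans (measureReal_mono fun ω hω i ↦ ?_)
  rw [abs_mul, abs_mul, abs_of_pos (inv_pos.2 hd'), inv_mul_le_iff₀ hd']
  exact (mul_le_of_le_one_left (abs_nonneg _) (hy i)).trans (hω i).le

end IsGaussSample

lemma mul_two_mul_exp_neg_le_one_div {x u : ℝ} (hx : 2 ≤ x) (hu : 3 * Real.log x ≤ u) :
    x * (2 * Real.exp (-u)) ≤ 1 / x := by
  have hx0 : 0 < x := by linarith
  have hexp : Real.exp (-u) ≤ 1 / x ^ 3 :=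
    calc Real.exp (-u) ≤ Real.exp (-(3 * Real.log x)) := by gcongr
      _ = 1 / x ^ 3 := by
        rw [Real.exp_neg, mul_comm, Real.exp_mul, Real.exp_log hx0, one_div]
        norm_cast
  calc x * (2 * Real.exp (-u)) ≤ x * (2 * (1 / x ^ 3)) := by gcongr
    _ = 2 / x * (1 / x) := by field_simp
    _ ≤ 1 / x := mul_le_of_le_one_left (by positivity) (div_le_one_of_le₀ hx hx0.le)

theorem stmt14_general {c : ℝ} (hc : 0 < c) :
    ∃ C > (0 : ℝ), ∃ n₀ : ℕ, ∀ n ≥ n₀, ∀ d : ℕ, c * n * Real.log n ≤ d →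
      ∀ δ : ℝ, C / √(Real.log n) ≤ δ →
      ∀ {Ω : Type*} [MeasurableSpace Ω] {μ : Measure Ω} {X : Ω → Matrix (Fin n) (Fin d) ℝ},
        IsGaussSample μ X → ∀ y : Fin n → ℝ, (∀ i, |y i| ≤ 1) →
      ∀ J : Fin n → Finset (Fin n), (∀ i, i ∉ J i) →
        (∀ i, ((J i).card : ℝ) ≤ n / Real.log n) →
        ENNReal.ofReal (1 - 1 / n) ≤
          μ {ω | ∀ i, |(d : ℝ)⁻¹ * (y i * ∑ j ∈ J i, y j * (X ω j ⬝ᵥ X ω i))| ≤ δ} := by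
  refine ⟨√(12 / c), by positivity, max 2 ⌈6 / c⌉₊, ?_⟩
  intro n hn d hd δ hδ Ω _ μ X hX y hy J hJ hJM
  have := hX.isProbabilityMeasure
  have hn2 : (2 : ℝ) ≤ n := by exact_mod_cast (le_max_left _ _).trans hn
  have hnc : 6 / c ≤ n := (Nat.le_ceil _).trans (by exact_mod_cast (le_max_right _ _).trans hn)
  have hlog : 0 < Real.log n := Real.log_pos (by linarith)
  have hd0 : 0 < d := Nat.cast_pos.1 (lt_of_lt_of_le (by positivity) hd)
  have hsq : (√(12 / c) / √(Real.log n)) ^ 2 = 12 / c / Real.log n := by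
    rw [div_pow, Real.sq_sqrt (by positivity), Real.sq_sqrt hlog.le]
  have hradius : (√(12 / c) / √(Real.log n)) ^ 2 ≤ 2 * (n / Real.log n) := by
    rw [hsq, ← mul_div_assoc]
    gcongr
    linarith [show 12 / c = 2 * (6 / c) by ring]
  have hexponent : 3 * Real.log n ≤
      d * (√(12 / c) / √(Real.log n)) ^ 2 / (4 * (n / Real.log n)) :=
    calc 3 * Real.log n
        = c * n * Real.log n * (12 / c / Real.log n) / (4 * (n / Real.log n)) := by
          field_simp
          norm_num
      _ ≤ d * (√(12 / c) / √(Real.log n)) ^ 2 / (4 * (n / Real.log n)) := by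
          rw [hsq]
          gcongr
  have hprob := hX.one_sub_le_measureReal_forall_abs_le hy hJ hJM hd0 (by positivity)
    (by positivity) hradius
  rw [ENNReal.ofReal_le_iff_le_toReal (measure_ne_top _ _)]
  calc 1 - 1 / (n : ℝ)
      ≤ 1 - n * (2 * Real.exp (-(d * (√(12 / c) / √(Real.log n)) ^ 2 / (4 * (n / Real.log n))))) :=
        sub_le_sub_left (mul_two_mul_exp_neg_le_one_div hn2 hexponent) 1
    _ ≤ _ := hprob
    _ ≤ _ := measureReal_mono fun ω hω i ↦ (hω i).trans hδ

lemma card_filter_val_lt_and_ne_le {n : ℕ} (m : ℕ) (i : Fin n) :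
    (Finset.univ.filter fun j : Fin n ↦ (j : ℕ) < m ∧ j ≠ i).card ≤ m := by
  calc (Finset.univ.filter fun j : Fin n ↦ (j : ℕ) < m ∧ j ≠ i).card
      ≤ (Finset.univ.filter fun j : Fin n ↦ (j : ℕ) < m).card :=
        Finset.card_le_card (Finset.monotone_filter_right _ fun _ _ h ↦ h.1)
    _ ≤ m := by simp [Fin.card_filter_val_lt]

/-- Second claim of Lemma 5 (asymptotic-lb1): below the threshold `d = ⌈(2−ε) n ln n⌉`, with
probability at least `1 − 1/n`, `max_{i ∈ [m]} |d⁻¹ yᵢ y_{[m]∖i}ᵀ X_{[m]∖i} xᵢ| ≤ ε/(2C₀)`,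
where `m = ⌊n / ln n⌋` and `y_{[m]∖i}ᵀ X_{[m]∖i} xᵢ = ∑_{j < m, j ≠ i} yⱼ ⟨xⱼ, xᵢ⟩`. -/
theorem stmt14 :
    ∀ C₀ > (0 : ℝ), ∀ c₁ : ℝ, 0 < c₁ → c₁ < 2 →
    ∃ C₂ > (0 : ℝ), ∃ n₀ : ℕ, ∀ n ≥ n₀, ∀ ε : ℝ,
      C₂ / Real.sqrt (Real.log n) ≤ ε → ε ≤ 2 - c₁ →
      ∀ (Ω : Type*) (_ : MeasurableSpace Ω) (μ : Measure Ω), IsProbabilityMeasure μ →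
      ∀ (X : Ω → Matrix (Fin n) (Fin ⌈(2 - ε) * n * Real.log n⌉₊) ℝ) (y : Fin n → ℝ),
        (∀ i, y i = 1 ∨ y i = -1) → IsGaussSample μ X →
        ENNReal.ofReal (1 - 1 / n) ≤
          μ {ω | ∀ i : Fin n, (i : ℕ) < ⌊(n : ℝ) / Real.log n⌋₊ →
              |((⌈(2 - ε) * n * Real.log n⌉₊ : ℝ))⁻¹ *
                (y i * ∑ j ∈ Finset.univ.filter
                    (fun j : Fin n => (j : ℕ) < ⌊(n : ℝ) / Real.log n⌋₊ ∧ j ≠ i),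
                  y j * (X ω j ⬝ᵥ X ω i))| ≤ ε / (2 * C₀)} := by
  intro C₀ hC₀ c₁ hc₁ _
  obtain ⟨C, hC, n₀, hmain⟩ := stmt14_general hc₁
  refine ⟨2 * C₀ * C, by positivity, n₀, fun n hn ε hε hεc₁ Ω _ μ _ X y hy hX ↦ ?_⟩
  have hdim : c₁ * n * Real.log n ≤ ⌈(2 - ε) * n * Real.log n⌉₊ :=
    le_trans (by gcongr; linarith) (Nat.le_ceil _)
  have hδ : C / √(Real.log n) ≤ ε / (2 * C₀) := by
    rwa [le_div_iff₀' (by positivity), ← mul_div_assoc]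
  have hcard (i : Fin n) := (Nat.cast_le.2 (card_filter_val_lt_and_ne_le _ i)).trans
    (Nat.floor_le (by positivity : (0 : ℝ) ≤ n / Real.log n))
  have hy' (i : Fin n) : |y i| ≤ 1 := by rcases hy i with h | h <;> simp [h]
  exact (hmain n hn _ hdim _ hδ hX y hy' _ (by simp) hcard).trans
    (measure_mono fun ω hω i _ ↦ hω i)

end
end
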